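/- Let k be a field of characteristic 2 and let A = k[x,y]/(x^2, y^2). Then for every natural number n, the n-th Hochschild homology HH_n(A, A) is a k-vector space of dimension 4(n+1). -/

import Mathlib

open TensorProduct MulOpposite CategoryTheory

section Machinery

variable (k : Type) [CommRing k] (S : Type) [Ring S] [Algebra k S] (P : Set (S × S))

/-- The `k`-submodule of (the restriction of scalars of) an `S`-module `N` generated by all
differences `p.1 • n - p.2 • n` for pairs `p ∈ P` and `n ∈ N`. -/
noncomputable def relSub (N : ModuleCat S) :
    Submodule k ((ModuleCat.restrictScalars (algebraMap k S)).obj N) :=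
  Submodule.span k {x | ∃ p ∈ P, ∃ n : N, x = p.1 • n - p.2 • n}

/-- The "coinvariants"-type additive functor sending an `S`-module `N` to its quotient,
as a `k`-module, by the span of all elements `p.1 • n - p.2 • n` for `p ∈ P`, `n ∈ N`. -/
noncomputable def coinvFunctor : ModuleCat S ⥤ ModuleCat k where
  obj N := ModuleCat.of k (((ModuleCat.restrictScalars (algebraMap k S)).obj N) ⧸ relSub k S P N)
  map {N N'} f := ModuleCat.ofHom <| Submodule.mapQ (relSub k S P N) (relSub k S P N')
      ((ModuleCat.restrictScalars (algebraMap k S)).map f).hom (by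
    rw [relSub, Submodule.span_le]
    rintro x ⟨p, hp, n, rfl⟩
    have : ((ModuleCat.restrictScalars (algebraMap k S)).map f) (p.1 • n - p.2 • n)
        = p.1 • (f n) - p.2 • (f n) := by
      show f (p.1 • n - p.2 • n) = _
      rw [map_sub, f.hom.map_smul, f.hom.map_smul]
    refine Submodule.mem_comap.mpr ?_
    exact Submodule.subset_span ⟨p, hp, f n, this⟩)
  map_id _ := ModuleCat.hom_ext (Submodule.linearMap_qext _ (LinearMap.ext fun _ => rfl))
  map_comp _ _ := ModuleCat.hom_ext (Submodule.linearMap_qext _ (LinearMap.ext fun _ => rfl))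

instance : (coinvFunctor k S P).Additive where
  map_add := ModuleCat.hom_ext (Submodule.linearMap_qext _ (LinearMap.ext fun _ => rfl))

end Machinery

/-- Hochschild homology `HH_n(A, A)` of a `k`-algebra `A`: the `n`-th left derived functor
(that is, `Tor_n` over the enveloping algebra `A ⊗[k] Aᵐᵒᵖ`) of the coinvariants functor
`N ↦ N / span { a•n - n•a }` (which is naturally isomorphic to `A ⊗_{A ⊗[k] Aᵐᵒᵖ} -`),
evaluated at the `A`-bimodule `A` itself. -/
noncomputable def HochschildHomology (k : Type) [CommRing k] (A : Type) [Ring A] [Algebra k A]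
    (n : ℕ) : ModuleCat k :=
  letI : Module (A ⊗[k] Aᵐᵒᵖ) A := TensorProduct.Algebra.module
  ((coinvFunctor k (A ⊗[k] Aᵐᵒᵖ)
      {p | ∃ a : A, p = (a ⊗ₜ[k] (1 : Aᵐᵒᵖ), (1 : A) ⊗ₜ[k] op a)}).leftDerived n).obj
    (ModuleCat.of (A ⊗[k] Aᵐᵒᵖ) A)

/-!
Let `u = x ⊗ 1 - 1 ⊗ x` and `v = y ⊗ 1 - 1 ⊗ y` in the enveloping algebra `Aᵉ`. They generate the
kernel of the multiplication `Aᵉ → A`, and they square to zero because `2 = 0`. Also because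
`2 = 0`, the partial derivatives descend to `A`. Let `E` be `∂/∂x` acting on the left factor of
`Aᵉ`. Then `E (u s) = s + u E s` and `E (v s) = v E s`, so the annihilator of `u` is generated by
`u`, even modulo `v`, and similarly for `v`. Hence the total complex of the tensor product of the
two periodic complexes `⋯ → Aᵉ → Aᵉ → Aᵉ` with differentials `u` and `v` is a free resolution
of `A`, of rank `n + 1` in degree `n`. Its differentials have coefficients in `(u, v)`, which
annihilates coinvariants, and therefore `HH_n(A, A) ≅ A ^ (n + 1)`.
-/

section Coinvariants

/-- The ideal generated by the differences `p.1 - p.2` for `p ∈ P`. Over a commutative ring the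
coinvariants of a module `N` are the quotient of `N` by this ideal. -/
def coinvIdeal {S : Type*} [CommRing S] (P : Set (S × S)) : Ideal S :=
  Ideal.span ((fun p => p.1 - p.2) '' P)

variable (k : Type) [CommRing k] {S : Type} [CommRing S] [Algebra k S] {P : Set (S × S)}

lemma mem_relSub_iff {N : ModuleCat S} {x : N} :
    x ∈ relSub k S P N ↔ x ∈ coinvIdeal P • (⊤ : Submodule S N) := by
  constructor
  · intro hx
    induction hx using Submodule.span_induction with
    | mem x hx =>
      obtain ⟨p, hp, n, rfl⟩ := hx
      rw [← sub_smul]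
      exact Submodule.smul_mem_smul (Ideal.subset_span ⟨p, hp, rfl⟩) trivial
    | zero => exact zero_mem _
    | add x y _ _ hx hy => exact add_mem hx hy
    | smul c x _ hx => exact Submodule.smul_mem _ (algebraMap k S c) hx
  · intro hx
    refine Submodule.smul_induction_on hx (fun r hr n _ => ?_) fun _ _ => Submodule.add_mem _
    induction hr using Submodule.span_induction generalizing n with
    | mem r hr =>
      obtain ⟨p, hp, rfl⟩ := hr
      exact Submodule.subset_span ⟨p, hp, n, sub_smul _ _ _⟩
    | zero => exact zero_smul S n ▸ Submodule.zero_mem _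
    | add r s _ _ hr hs => exact add_smul r s n ▸ Submodule.add_mem _ (hr n trivial) (hs n trivial)
    | smul a r _ hr =>
      rw [smul_eq_mul, mul_comm, mul_smul]
      exact hr (a • n) trivial

lemma coinvFunctor_map_eq_zero {N N' : ModuleCat S} (f : N ⟶ N')
    (hf : ∀ x, f x ∈ coinvIdeal P • (⊤ : Submodule S N')) : (coinvFunctor k S P).map f = 0 :=
  ModuleCat.hom_ext <| Submodule.linearMap_qext _ <| LinearMap.ext fun x =>
    (Submodule.Quotient.mk_eq_zero _).2 ((mem_relSub_iff k).2 (hf x))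

/-- The coinvariants of `N` are identified with any quotient of `N` by `coinvIdeal P • ⊤`. -/
noncomputable def coinvFunctorObjEquiv {N : ModuleCat S} {M : Type} [AddCommGroup M] [Module S M]
    [Module k M] [IsScalarTower k S M] (φ : N →ₗ[S] M) (hφ : Function.Surjective φ)
    (hker : LinearMap.ker φ = coinvIdeal P • ⊤) : (coinvFunctor k S P).obj N ≃ₗ[k] M :=
  let φk : (ModuleCat.restrictScalars (algebraMap k S)).obj N →ₗ[k] M :=
    { toFun := φ
      map_add' := map_add φ
      map_smul' := fun c x => (map_smul φ (algebraMap k S c) x).trans (algebraMap_smul S c (φ x)) }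
  have hrel : relSub k S P N = LinearMap.ker φk :=
    Submodule.ext fun _ => (mem_relSub_iff k).trans (hker ▸ Iff.rfl)
  Submodule.quotEquivOfEq _ _ hrel ≪≫ₗ φk.quotKerEquivOfSurjective hφ

end Coinvariants

section LeftDerived

open Limits

variable {C D : Type*} [Category C] [Category D] [Abelian C] [Abelian D]

/-- A complex of projective objects which is exact in positive degrees, together with a cokernel
`ε` of its last differential, as a projective resolution. -/
noncomputable def projectiveResolutionOfExact {Z : C} (K : ChainComplex C ℕ)
    [∀ n, Projective (K.X n)] (ε : K.X 0 ⟶ Z) [Epi ε] (w : K.d 1 0 ≫ ε = 0)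
    (exact_zero : (ShortComplex.mk _ _ w).Exact) (exact_succ : ∀ n, K.ExactAt (n + 1)) :
    ProjectiveResolution Z where
  complex := K
  projective := inferInstance
  π := (ChainComplex.toSingle₀Equiv K Z).symm ⟨ε, w⟩
  quasiIso := ⟨fun n => by
    cases n with
    | zero =>
      have hπ := ChainComplex.toSingle₀Equiv_symm_apply_f_zero ε w
      rw [ChainComplex.quasiIsoAt₀_iff, ShortComplex.quasiIso_iff_of_zeros' _
        (K.shape 0 0 (by simp)) rfl rfl]
      exact ⟨by simpa [hπ] using! exact_zero, by simpa [hπ]⟩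
    | succ n =>
      rw [quasiIsoAt_iff_exactAt' _ _ (ChainComplex.exactAt_succ_single_obj ..)]
      exact exact_succ n⟩

/-- If `F` kills the differentials of a projective resolution, no homology has to be taken. -/
noncomputable def leftDerivedObjIsoOfMapDEqZero [HasProjectiveResolutions C] {Z : C}
    (R : ProjectiveResolution Z) (F : C ⥤ D) [F.Additive]
    (h : ∀ i j, F.map (R.complex.d i j) = 0) (n : ℕ) :
    (F.leftDerived n).obj Z ≅ F.obj (R.complex.X n) :=
  R.isoLeftDerivedObj F n ≪≫ (ShortComplex.HomologyData.ofZeros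
    (((F.mapHomologicalComplex _).obj R.complex).sc n) (h _ _) (h _ _)).left.homologyIso

end LeftDerived

section ExactPair

universe u

variable {S : Type u} [CommRing S]

lemma mem_smul_top_pi_iff {ι : Type*} [Finite ι] {I : Ideal S} {f : ι → S} :
    f ∈ I • (⊤ : Submodule S (ι → S)) ↔ ∀ i, f i ∈ I := by
  classical
  cases nonempty_fintype ι
  constructor
  · exact fun hf i => Submodule.smul_induction_on (p := fun f => f i ∈ I) hf
      (fun r hr g _ => I.mul_mem_right (g i) hr) fun _ _ => add_mem
  · intro hf
    rw [pi_eq_sum_univ' f]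
    exact Submodule.sum_mem _ fun i _ => Submodule.smul_mem_smul (hf i) trivial

/-- Two elements `u`, `v` of a commutative ring such that `v` generates its own annihilator,
`u` generates its own annihilator modulo `v`, and `u` squares to zero. -/
structure IsExactPair (u v : S) : Prop where
  mul_self_left : u * u = 0
  mul_eq_zero_iff : ∀ {a}, v * a = 0 ↔ v ∣ a
  mem_span_of_dvd : ∀ {a}, v ∣ u * a → a ∈ Ideal.span {u, v}

/-- The differential `(d f) j = u f_{j+1} + (-1)ⁿ v f_j` of the total complex of the tensor product
of the two periodic complexes `⋯ → S → S → S` with differentials `u` and `v`. The summand of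
bidegree `(j, n - j)` has index `j`. -/
def periodicD (u v : S) (n : ℕ) : (Fin (n + 2) → S) →ₗ[S] (Fin (n + 1) → S) :=
  u • LinearMap.funLeft S S Fin.succ + ((-1) ^ n * v) • LinearMap.funLeft S S Fin.castSucc

lemma periodicD_apply (u v : S) (n : ℕ) (f : Fin (n + 2) → S) (j : Fin (n + 1)) :
    periodicD u v n f j = u * f j.succ + (-1) ^ n * v * f j.castSucc := rfl

lemma periodicD_mem_smul_top {u v : S} {I : Ideal S} (hu : u ∈ I) (hv : v ∈ I) (n : ℕ)
    (f : Fin (n + 2) → S) : periodicD u v n f ∈ I • (⊤ : Submodule S (Fin (n + 1) → S)) :=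
  add_mem (Submodule.smul_mem_smul hu trivial)
    (Submodule.smul_mem_smul (I.mul_mem_left _ hv) trivial)

namespace IsExactPair

variable {u v : S}

lemma neg_right (h : IsExactPair u v) : IsExactPair u (-v) where
  mul_self_left := h.mul_self_left
  mul_eq_zero_iff := by
    intro a
    simpa using h.mul_eq_zero_iff (a := a)
  mem_span_of_dvd := by
    intro a ha
    obtain ⟨b, c, hbc⟩ := Ideal.mem_span_pair.1 (h.mem_span_of_dvd (neg_dvd.1 ha))
    exact Ideal.mem_span_pair.2 ⟨b, -c, by rw [← hbc]; ring⟩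

lemma neg_one_pow_mul_right (h : IsExactPair u v) (n : ℕ) : IsExactPair u ((-1) ^ n * v) := by
  rcases neg_one_pow_eq_or S n with hn | hn <;> rw [hn]
  · simpa using h
  · simpa using h.neg_right

lemma mul_self_right (h : IsExactPair u v) : v * v = 0 := h.mul_eq_zero_iff.2 dvd_rfl

lemma exists_primitive_of_tail (h : IsExactPair u v) {n : ℕ} {f g : Fin (n + 2) → S}
    (hf : u * f 1 + v * f 0 = 0)
    (hg : ∀ j : Fin (n + 1), f j.succ = u * g j.succ - v * g j.castSucc) :
    ∃ g : Fin (n + 3) → S, ∀ j : Fin (n + 2), f j = u * g j.succ - v * g j.castSucc := by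
  -- As `u² = 0`, the remaining equation `f 0 = u * g 0` holds up to the annihilator of `v`.
  have hv : v * (f 0 - u * g 0) = 0 := by
    have h1 : f 1 = u * g 1 - v * g 0 := hg 0
    linear_combination hf - u * h1 - g 1 * h.mul_self_left
  obtain ⟨c, hc⟩ := h.mul_eq_zero_iff.1 hv
  refine ⟨Fin.cons (-c) g, Fin.cases ?_ hg⟩
  change f 0 = u * g 0 - v * -c
  linear_combination hc

lemma exists_primitive_of_cycle (h : IsExactPair u v) {n : ℕ} (f : Fin (n + 2) → S)
    (hf : ∀ j : Fin (n + 1), u * f j.succ + v * f j.castSucc = 0) :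
    ∃ g : Fin (n + 3) → S, ∀ j : Fin (n + 2), f j = u * g j.succ - v * g j.castSucc := by
  induction n with
  | zero =>
    have hf₀ : u * f 1 + v * f 0 = 0 := hf 0
    have hdvd : v ∣ u * f 1 := ⟨-f 0, by linear_combination hf₀⟩
    obtain ⟨a, b, hab⟩ := Ideal.mem_span_pair.1 (h.mem_span_of_dvd hdvd)
    refine h.exists_primitive_of_tail (g := ![-b, a]) hf₀ fun j => ?_
    rw [Fin.fin_one_eq_zero j]
    change f 1 = u * a - v * -b
    linear_combination -hab
  | succ n ih =>
    obtain ⟨g, hg⟩ := ih (fun j => f j.succ) fun j => hf j.succ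
    exact h.exists_primitive_of_tail (hf 0) hg

lemma exact_periodicD (h : IsExactPair u v) (n : ℕ) :
    Function.Exact (periodicD u v (n + 1)) (periodicD u v n) := by
  intro f
  constructor
  · intro hf
    obtain ⟨g, hg⟩ := (h.neg_one_pow_mul_right n).exists_primitive_of_cycle f (congrFun hf)
    refine ⟨g, funext fun j => ?_⟩
    rw [hg, periodicD_apply]
    ring
  · rintro ⟨g, rfl⟩
    ext j
    simp only [periodicD_apply, Fin.succ_castSucc, Pi.zero_apply, pow_succ]
    linear_combination (g j.succ.succ) * h.mul_self_left -
      (-1) ^ n * (-1) ^ n * g j.castSucc.castSucc * h.mul_self_right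

lemma exact_periodicD_zero {Z : Type*} [AddCommGroup Z] [Module S Z] {ε : S →ₗ[S] Z}
    (hker : LinearMap.ker ε = Ideal.span {u, v}) :
    Function.Exact (periodicD u v 0) (ε ∘ₗ LinearMap.proj (0 : Fin 1)) := by
  intro f
  rw [LinearMap.comp_apply, LinearMap.proj_apply, ← LinearMap.mem_ker, hker, Ideal.mem_span_pair]
  constructor
  · rintro ⟨a, b, hab⟩
    refine ⟨![b, a], funext fun j => ?_⟩
    rw [Fin.fin_one_eq_zero j]
    change u * a + (-1) ^ 0 * v * b = f 0
    linear_combination hab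
  · rintro ⟨g, rfl⟩
    refine ⟨g 1, g 0, ?_⟩
    change g 1 * u + g 0 * v = u * g 1 + (-1) ^ 0 * v * g 0
    ring

/-- The total complex of the tensor product of the two periodic complexes of `u` and `v`. -/
noncomputable def complex (h : IsExactPair u v) : ChainComplex (ModuleCat.{u} S) ℕ :=
  ChainComplex.of (fun n => ModuleCat.of S (Fin (n + 1) → S))
    (fun n => ModuleCat.ofHom (periodicD u v n))
    fun n => ModuleCat.hom_ext (h.exact_periodicD n).linearMap_comp_eq_zero

lemma complex_d (h : IsExactPair u v) (n : ℕ) :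
    h.complex.d (n + 1) n = ModuleCat.ofHom (periodicD u v n) :=
  ChainComplex.of_d (fun n => ModuleCat.of S (Fin (n + 1) → S))
    (fun n => ModuleCat.ofHom (periodicD u v n)) n

lemma complex_exactAt_succ (h : IsExactPair u v) (n : ℕ) : h.complex.ExactAt (n + 1) := by
  rw [HomologicalComplex.exactAt_iff' _ (n + 2) (n + 1) n (by simp) (by simp),
    ShortComplex.ShortExact.moduleCat_exact_iff_function_exact]
  simpa [complex_d] using! h.exact_periodicD n

/-- The total complex of an exact pair `u`, `v` resolves `S ⧸ (u, v)`. -/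
noncomputable def projectiveResolution (h : IsExactPair u v) {Z : Type u} [AddCommGroup Z]
    [Module S Z] {ε : S →ₗ[S] Z} (hε : Function.Surjective ε)
    (hker : LinearMap.ker ε = Ideal.span {u, v}) : ProjectiveResolution (ModuleCat.of S Z) :=
  have (n : ℕ) : Projective (h.complex.X n) :=
    inferInstanceAs (Projective (ModuleCat.of S (Fin (n + 1) → S)))
  let π : h.complex.X 0 ⟶ ModuleCat.of S Z := ModuleCat.ofHom (ε ∘ₗ LinearMap.proj (0 : Fin 1))
  have : Epi π := (ModuleCat.epi_iff_surjective _).2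
    (hε.comp (LinearMap.proj_surjective (0 : Fin 1)))
  have exact_zero := exact_periodicD_zero hker
  projectiveResolutionOfExact h.complex π
    (by rw [complex_d h 0]; exact ModuleCat.hom_ext exact_zero.linearMap_comp_eq_zero)
    ((ShortComplex.ShortExact.moduleCat_exact_iff_function_exact _).2
      (by simpa [complex_d] using! exact_zero))
    h.complex_exactAt_succ

end IsExactPair

end ExactPair

section EnvelopingAlgebra

variable (k : Type*) [CommRing k] {A : Type*} [CommRing A] [Algebra k A]

attribute [local instance] instModuleTensorProductMop

/-- The commutator `a ⊗ 1 - 1 ⊗ a` in the enveloping algebra. -/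
noncomputable def envComm (a : A) : A ⊗[k] Aᵐᵒᵖ := a ⊗ₜ 1 - 1 ⊗ₜ op a

variable (A) in
/-- The augmentation `a ⊗ b ↦ a * b` of the enveloping algebra. -/
noncomputable def envAugmentation : A ⊗[k] Aᵐᵒᵖ →ₗ[A ⊗[k] Aᵐᵒᵖ] A :=
  LinearMap.toSpanSingleton _ A 1

instance : IsScalarTower k (A ⊗[k] Aᵐᵒᵖ) A :=
  IsScalarTower.of_algebraMap_smul (A := A ⊗[k] Aᵐᵒᵖ) (M := A) fun c a => by
    change algebraMap k A c • ((1 : Aᵐᵒᵖ) • a) = c • a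
    rw [one_smul, algebraMap_smul]

lemma envAugmentation_tmul (a : A) (b : Aᵐᵒᵖ) : envAugmentation k A (a ⊗ₜ b) = a * unop b := by
  change a • (b • (1 : A)) = a * unop b
  rw [smul_eq_mul_unop, one_mul, smul_eq_mul]

lemma envAugmentation_surjective : Function.Surjective (envAugmentation k A) := fun a =>
  ⟨a ⊗ₜ 1, by rw [envAugmentation_tmul, unop_one, mul_one]⟩

lemma envAugmentation_envComm (a : A) : envAugmentation k A (envComm k a) = 0 := by
  simp [envComm, envAugmentation_tmul]

lemma tmul_one_mul_envComm_unop (a : A) (b : Aᵐᵒᵖ) :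
    a ⊗ₜ 1 * envComm k (unop b) = envAugmentation k A (a ⊗ₜ b) ⊗ₜ 1 - a ⊗ₜ b := by
  simp [envAugmentation_tmul, envComm, mul_sub]

variable {k}

lemma envComm_mul (a b : A) :
    envComm k (a * b) = a ⊗ₜ 1 * envComm k b + 1 ⊗ₜ op b * envComm k a := by
  simp only [envComm, mul_sub, Algebra.TensorProduct.tmul_mul_tmul, mul_one, one_mul, op_mul]
  abel

lemma envComm_mem_span {s : Set A} (hs : Algebra.adjoin k s = ⊤) (a : A) :
    envComm k a ∈ Ideal.span (envComm k '' s) := by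
  induction (hs ▸ Algebra.mem_top : a ∈ Algebra.adjoin k s) using Algebra.adjoin_induction with
  | mem x hx => exact Ideal.subset_span ⟨x, hx, rfl⟩
  | algebraMap r =>
    have : envComm k (algebraMap k A r) = 0 := by
      simp [envComm, Algebra.algebraMap_eq_smul_one, TensorProduct.smul_tmul]
    exact this ▸ zero_mem _
  | add x y _ _ hx hy =>
    have : envComm k (x + y) = envComm k x + envComm k y := by
      simp only [envComm, add_tmul, MulOpposite.op_add, tmul_add]
      abel
    exact this ▸ add_mem hx hy
  | mul x y _ _ hx hy =>
    rw [envComm_mul]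
    exact add_mem (Ideal.mul_mem_left _ _ hy) (Ideal.mul_mem_left _ _ hx)

lemma ker_envAugmentation {s : Set A} (hs : Algebra.adjoin k s = ⊤) :
    LinearMap.ker (envAugmentation k A) = Ideal.span (envComm k '' s) := by
  apply le_antisymm
  · have sub_mem (t : A ⊗[k] Aᵐᵒᵖ) :
        envAugmentation k A t ⊗ₜ 1 - t ∈ Ideal.span (envComm k '' s) := by
      induction t using TensorProduct.induction_on with
      | zero => simp
      | tmul a b =>
        rw [← tmul_one_mul_envComm_unop]
        exact Ideal.mul_mem_left _ _ (envComm_mem_span hs _)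
      | add t t' ht ht' =>
        rw [map_add, add_tmul, add_sub_add_comm]
        exact add_mem ht ht'
    intro t ht
    simpa [LinearMap.mem_ker.1 ht] using sub_mem t
  · rw [Ideal.span, Submodule.span_le]
    rintro _ ⟨a, _, rfl⟩
    exact envAugmentation_envComm k a

variable (k A) in
/-- The pairs of a left and a right multiplication whose differences define Hochschild
coinvariants. -/
abbrev leftRightPairs : Set ((A ⊗[k] Aᵐᵒᵖ) × (A ⊗[k] Aᵐᵒᵖ)) :=
  {p | ∃ a : A, p = (a ⊗ₜ[k] (1 : Aᵐᵒᵖ), (1 : A) ⊗ₜ[k] op a)}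

lemma ker_envAugmentation_eq_coinvIdeal :
    LinearMap.ker (envAugmentation k A) = coinvIdeal (leftRightPairs k A) := by
  rw [ker_envAugmentation (Algebra.adjoin_univ k A), coinvIdeal]
  congr 1
  ext t
  constructor
  · rintro ⟨a, -, rfl⟩
    exact ⟨_, ⟨a, rfl⟩, rfl⟩
  · rintro ⟨_, ⟨a, rfl⟩, rfl⟩
    exact ⟨a, trivial, rfl⟩

lemma ker_compLeft_envAugmentation {ι : Type*} [Finite ι] :
    LinearMap.ker ((envAugmentation k A).compLeft ι) = coinvIdeal (leftRightPairs k A) • ⊤ := by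
  rw [LinearMap.ker_compLeft, ker_envAugmentation_eq_coinvIdeal]
  ext f
  simp only [Submodule.mem_pi, Set.mem_univ, forall_const, mem_smul_top_pi_iff]

lemma rTensor_envComm_mul (D : Derivation k A A) (a : A) (t : A ⊗[k] Aᵐᵒᵖ) :
    (D : A →ₗ[k] A).rTensor Aᵐᵒᵖ (envComm k a * t) =
      D a ⊗ₜ 1 * t + envComm k a * (D : A →ₗ[k] A).rTensor Aᵐᵒᵖ t := by
  induction t using TensorProduct.induction_on with
  | zero => simp
  | tmul b c =>
    simp only [envComm, sub_mul, Algebra.TensorProduct.tmul_mul_tmul, map_sub,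
      LinearMap.rTensor_tmul, Derivation.coeFn_coe, Derivation.leibniz, smul_eq_mul, one_mul,
      add_tmul, mul_comm b]
    abel
  | add t t' ht ht' =>
    rw [mul_add, map_add, map_add, ht, ht']
    ring

end EnvelopingAlgebra

/-- Square-zero generators `coord i` of an algebra together with the corresponding partial
derivatives `deriv i`. -/
structure SquareZeroCoordinates (k : Type*) [CommRing k] (A : Type*) [CommRing A] [Algebra k A]
    (ι : Type*) where
  coord : ι → A
  deriv : ι → Derivation k A A
  coord_sq : ∀ i, coord i ^ 2 = 0
  adjoin_coord : Algebra.adjoin k (Set.range coord) = ⊤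
  deriv_coord_self : ∀ i, deriv i (coord i) = 1
  deriv_coord_of_ne : ∀ i j, i ≠ j → deriv i (coord j) = 0

namespace SquareZeroCoordinates

attribute [local instance] instModuleTensorProductMop

variable {k : Type*} [CommRing k] {A : Type*} [CommRing A] [Algebra k A] {ι : Type*}
  (X : SquareZeroCoordinates k A ι)

include X in
lemma two_eq_zero [Nonempty ι] : (2 : A) = 0 := by
  obtain ⟨i⟩ := ‹Nonempty ι›
  have hx : 2 * X.coord i = 0 := by
    simpa [sq, X.deriv_coord_self, two_mul] using congrArg (X.deriv i) (X.coord_sq i)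
  simpa [two_mul, one_add_one_eq_two, X.deriv_coord_self] using congrArg (X.deriv i) hx

lemma envComm_coord_mul_self (i : ι) : envComm k (X.coord i) * envComm k (X.coord i) = 0 := by
  have : Nonempty ι := ⟨i⟩
  have hx : X.coord i * X.coord i = 0 := by rw [← sq, X.coord_sq]
  have h2 : (2 : A ⊗[k] Aᵐᵒᵖ) = 0 := by
    rw [← map_ofNat (Algebra.TensorProduct.includeLeft (R := k) (S := k)), X.two_eq_zero, map_zero]
  have hl : X.coord i ⊗ₜ[k] (1 : Aᵐᵒᵖ) * X.coord i ⊗ₜ 1 = 0 := by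
    rw [Algebra.TensorProduct.tmul_mul_tmul, hx, zero_tmul]
  have hr : (1 : A) ⊗ₜ[k] op (X.coord i) * 1 ⊗ₜ op (X.coord i) = 0 := by
    rw [Algebra.TensorProduct.tmul_mul_tmul, ← op_mul, hx, op_zero, tmul_zero]
  rw [envComm]
  linear_combination hl + hr - X.coord i ⊗ₜ 1 * 1 ⊗ₜ op (X.coord i) * h2

/-- The partial derivative `deriv i` acting on the left factor of the enveloping algebra. -/
noncomputable def envDeriv (i : ι) : A ⊗[k] Aᵐᵒᵖ →ₗ[k] A ⊗[k] Aᵐᵒᵖ :=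
  (X.deriv i : A →ₗ[k] A).rTensor Aᵐᵒᵖ

lemma envDeriv_envComm_coord_mul (i : ι) (t : A ⊗[k] Aᵐᵒᵖ) :
    X.envDeriv i (envComm k (X.coord i) * t) = t + envComm k (X.coord i) * X.envDeriv i t := by
  rw [envDeriv, rTensor_envComm_mul, X.deriv_coord_self, ← Algebra.TensorProduct.one_def, one_mul]

lemma envDeriv_envComm_coord_mul_of_ne {i j : ι} (hij : i ≠ j) (t : A ⊗[k] Aᵐᵒᵖ) :
    X.envDeriv i (envComm k (X.coord j) * t) = envComm k (X.coord j) * X.envDeriv i t := by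
  rw [envDeriv, rTensor_envComm_mul, X.deriv_coord_of_ne i j hij, zero_tmul, zero_mul, zero_add]

lemma isExactPair_envComm_coord {i j : ι} (hij : i ≠ j) :
    IsExactPair (envComm k (X.coord i)) (envComm k (X.coord j)) where
  mul_self_left := X.envComm_coord_mul_self i
  mul_eq_zero_iff := by
    intro t
    constructor
    · intro ht
      have h := X.envDeriv_envComm_coord_mul j t
      rw [ht, map_zero] at h
      exact ⟨-X.envDeriv j t, by linear_combination -h⟩
    · rintro ⟨t, rfl⟩
      rw [← mul_assoc, X.envComm_coord_mul_self, zero_mul]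
  mem_span_of_dvd := by
    rintro t ⟨t', h⟩
    have hD := congrArg (X.envDeriv i) h
    rw [X.envDeriv_envComm_coord_mul, X.envDeriv_envComm_coord_mul_of_ne hij] at hD
    exact Ideal.mem_span_pair.2
      ⟨-X.envDeriv i t, X.envDeriv i t', by linear_combination -hD⟩

lemma ker_envAugmentation_eq_span_pair (X : SquareZeroCoordinates k A (Fin 2)) :
    LinearMap.ker (envAugmentation k A) =
      Ideal.span {envComm k (X.coord 0), envComm k (X.coord 1)} := by
  rw [ker_envAugmentation X.adjoin_coord, ← Set.range_comp]
  congr 1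
  ext
  simp [eq_comm]

/-- The resolution of the bimodule `A` by the total complex of `envComm x₀` and `envComm x₁`. -/
noncomputable def resolution (X : SquareZeroCoordinates k A (Fin 2)) :
    ProjectiveResolution (ModuleCat.of (A ⊗[k] Aᵐᵒᵖ) A) :=
  (X.isExactPair_envComm_coord Fin.zero_ne_one).projectiveResolution
    (envAugmentation_surjective k) X.ker_envAugmentation_eq_span_pair

section HochschildHomology

variable {k : Type} [CommRing k] {A : Type} [CommRing A] [Algebra k A]
  (X : SquareZeroCoordinates k A (Fin 2))

lemma coinvFunctor_map_resolution_d (i j : ℕ) :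
    (coinvFunctor k (A ⊗[k] Aᵐᵒᵖ) (leftRightPairs k A)).map (X.resolution.complex.d i j) = 0 := by
  by_cases hij : j + 1 = i
  · subst hij
    have mem (a : A) : envComm k a ∈ coinvIdeal (leftRightPairs k A) :=
      ker_envAugmentation_eq_coinvIdeal.le (envAugmentation_envComm k a)
    refine coinvFunctor_map_eq_zero k _ fun f => ?_
    rw [show X.resolution.complex.d (j + 1) j = _ from
      (X.isExactPair_envComm_coord Fin.zero_ne_one).complex_d j]
    exact periodicD_mem_smul_top (mem (X.coord 0)) (mem (X.coord 1)) j f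
  · rw [X.resolution.complex.shape i j hij, Functor.map_zero]

/-- Hochschild homology is read off the coinvariants of `resolution`, whose differentials vanish. -/
noncomputable def hochschildHomologyEquiv (n : ℕ) :
    HochschildHomology k A n ≃ₗ[k] (Fin (n + 1) → A) :=
  (leftDerivedObjIsoOfMapDEqZero X.resolution _
      X.coinvFunctor_map_resolution_d n).toLinearEquiv ≪≫ₗ
    coinvFunctorObjEquiv k ((envAugmentation k A).compLeft (Fin (n + 1)))
      (envAugmentation_surjective k).comp_left ker_compLeft_envAugmentation

end HochschildHomology

end SquareZeroCoordinates

section TruncatedPolynomial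

open MvPolynomial

/-- The ideal of `m`-th powers of the variables, which defines the truncated polynomial ring. -/
noncomputable def truncIdeal (k : Type*) [CommRing k] (σ : Type*) (m : ℕ) :
    Ideal (MvPolynomial σ k) :=
  Ideal.span (Set.range fun i => X i ^ m)

section Basis

variable {k : Type*} [CommRing k] {σ : Type*} {m : ℕ}

lemma mem_truncIdeal_iff {p : MvPolynomial σ k} :
    p ∈ truncIdeal k σ m ↔ ∀ d ∈ p.support, ∃ i, m ≤ d i := by
  have hspan : truncIdeal k σ m =
      Ideal.span ((monomial · 1) '' Set.range fun i => Finsupp.single i m) := by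
    simp only [truncIdeal, X_pow_eq_monomial, ← Set.range_comp, Function.comp_def]
  rw [hspan, mem_ideal_span_monomial_image]
  simp only [Set.exists_range_iff, Finsupp.single_le_iff]

variable [Fintype σ]

/-- The exponent of a monomial with all exponents less than `m`. -/
noncomputable def truncExponent (e : σ → Fin m) : σ →₀ ℕ :=
  Finsupp.equivFunOnFinite.symm fun i => e i

lemma truncExponent_injective : Function.Injective (truncExponent (σ := σ) (m := m)) :=
  Finsupp.equivFunOnFinite.symm.injective.comp Fin.val_injective.comp_left

variable (k σ m) in
/-- The coefficients at the monomials with all exponents less than `m`. -/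
noncomputable def truncCoeff : MvPolynomial σ k →ₗ[k] ((σ → Fin m) → k) :=
  LinearMap.pi fun e => lcoeff k (truncExponent e)

lemma ker_truncCoeff : LinearMap.ker (truncCoeff k σ m) = (truncIdeal k σ m).restrictScalars k := by
  ext p
  rw [LinearMap.mem_ker, Submodule.restrictScalars_mem, mem_truncIdeal_iff]
  constructor
  · intro hp d hd
    by_contra! hlt
    refine mem_support_iff.1 hd ?_
    have hexp : truncExponent (fun i => ⟨d i, hlt i⟩) = d := Finsupp.ext fun _ => rfl
    exact hexp ▸ congrFun hp fun i => ⟨d i, hlt i⟩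
  · intro hp
    funext e
    by_contra hne
    obtain ⟨i, hi⟩ := hp _ (mem_support_iff.2 hne)
    exact (e i).is_lt.not_ge hi

lemma truncCoeff_surjective : Function.Surjective (truncCoeff k σ m) := by
  classical
  intro c
  refine ⟨∑ e, monomial (truncExponent e) (c e), ?_⟩
  funext e
  simp [truncCoeff, coeff_monomial, truncExponent_injective.eq_iff]

variable (k σ m) in
/-- The monomials with all exponents less than `m` form a basis. -/
noncomputable def truncEquiv :
    (MvPolynomial σ k ⧸ truncIdeal k σ m) ≃ₗ[k] ((σ → Fin m) → k) :=
  (Submodule.Quotient.restrictScalarsEquiv k (truncIdeal k σ m)).symm ≪≫ₗ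
    Submodule.quotEquivOfEq _ _ ker_truncCoeff.symm ≪≫ₗ
    (truncCoeff k σ m).quotKerEquivOfSurjective truncCoeff_surjective

end Basis

section Derivation

variable {k : Type*} [CommRing k] {σ : Type*} {m : ℕ}

lemma derivation_mem_span {R : Type*} [CommRing R] [Algebra k R] (D : Derivation k R R) {s : Set R}
    (hs : ∀ x ∈ s, D x ∈ Ideal.span s) {p : R} (hp : p ∈ Ideal.span s) : D p ∈ Ideal.span s := by
  induction hp using Submodule.span_induction with
  | mem x hx => exact hs x hx
  | zero =>
    rw [map_zero]
    exact zero_mem _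
  | add x y _ _ hx hy => exact D.map_add x y ▸ add_mem hx hy
  | smul a x hx hDx =>
    rw [smul_eq_mul, D.leibniz]
    exact add_mem (Ideal.mul_mem_left _ a hDx) (Ideal.mul_mem_right _ _ hx)

lemma derivation_mem_truncIdeal (hm : (m : k) = 0)
    (D : Derivation k (MvPolynomial σ k) (MvPolynomial σ k)) {p : MvPolynomial σ k}
    (hp : p ∈ truncIdeal k σ m) : D p ∈ truncIdeal k σ m := by
  refine derivation_mem_span D ?_ hp
  rintro _ ⟨i, rfl⟩
  rw [D.leibniz_pow, ← Nat.cast_smul_eq_nsmul k, hm, zero_smul]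
  exact zero_mem _

/-- The derivation of the truncated polynomial ring induced by one of the polynomial ring. -/
noncomputable def truncDerivation (hm : (m : k) = 0)
    (D : Derivation k (MvPolynomial σ k) (MvPolynomial σ k)) :
    Derivation k (MvPolynomial σ k ⧸ truncIdeal k σ m) (MvPolynomial σ k ⧸ truncIdeal k σ m) :=
  Derivation.liftOfSurjective (f := Ideal.Quotient.mkₐ k (truncIdeal k σ m))
    (Ideal.Quotient.mkₐ_surjective k _) (d := D) fun _ hp =>
      Ideal.Quotient.eq_zero_iff_mem.2 <|
        derivation_mem_truncIdeal hm D (Ideal.Quotient.eq_zero_iff_mem.1 hp)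

lemma truncDerivation_mk (hm : (m : k) = 0)
    (D : Derivation k (MvPolynomial σ k) (MvPolynomial σ k)) (p : MvPolynomial σ k) :
    truncDerivation hm D (Ideal.Quotient.mk (truncIdeal k σ m) p) =
      Ideal.Quotient.mk (truncIdeal k σ m) (D p) := by
  rw [truncDerivation]
  exact Derivation.liftOfSurjective_apply (Ideal.Quotient.mkₐ_surjective k (truncIdeal k σ m)) _ p

variable (k σ) in
/-- In characteristic `2` the partial derivatives descend to `k[X i]/(X i ^ 2)`. -/
noncomputable def truncCoordinates [CharP k 2] :
    SquareZeroCoordinates k (MvPolynomial σ k ⧸ truncIdeal k σ 2) σ where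
  coord i := Ideal.Quotient.mk _ (X i)
  deriv i := truncDerivation (CharP.cast_eq_zero k 2) (pderiv i)
  coord_sq i := by
    rw [← map_pow]
    exact Ideal.Quotient.eq_zero_iff_mem.2 (Ideal.subset_span ⟨i, rfl⟩)
  adjoin_coord := by
    have := congrArg (Subalgebra.map (Ideal.Quotient.mkₐ k (truncIdeal k σ 2)))
      (adjoin_range_X (R := k) (σ := σ))
    rwa [AlgHom.map_adjoin, ← Set.range_comp, Algebra.map_top,
      (AlgHom.range_eq_top _).2 (Ideal.Quotient.mkₐ_surjective k _)] at this
  deriv_coord_self i := by rw [truncDerivation_mk, pderiv_X_self, map_one]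
  deriv_coord_of_ne i j hij := by rw [truncDerivation_mk, pderiv_X_of_ne hij.symm, map_zero]

end Derivation

end TruncatedPolynomial

theorem hochschildHomology_truncPoly_general (k : Type) [CommRing k] [CharP k 2] (n : ℕ) :
    Module.Free k
      (HochschildHomology k
        (MvPolynomial (Fin 2) k ⧸
          Ideal.span {(MvPolynomial.X 0 : MvPolynomial (Fin 2) k) ^ 2,
            (MvPolynomial.X 1 : MvPolynomial (Fin 2) k) ^ 2}) n) ∧
    Module.finrank k
      (HochschildHomology k
        (MvPolynomial (Fin 2) k ⧸
          Ideal.span {(MvPolynomial.X 0 : MvPolynomial (Fin 2) k) ^ 2,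
            (MvPolynomial.X 1 : MvPolynomial (Fin 2) k) ^ 2}) n)
      = 4 * (n + 1) := by
  have hideal : Ideal.span {(MvPolynomial.X 0 : MvPolynomial (Fin 2) k) ^ 2,
      (MvPolynomial.X 1 : MvPolynomial (Fin 2) k) ^ 2} = truncIdeal k (Fin 2) 2 := by
    congr 1
    ext p
    simp [eq_comm]
  have : Nontrivial k := CharP.nontrivial_of_char_ne_one (v := 2) (by decide)
  rw [hideal]
  have e := (truncCoordinates k (Fin 2)).hochschildHomologyEquiv n ≪≫ₗ
    LinearEquiv.piCongrRight fun _ => truncEquiv k (Fin 2) 2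
  refine ⟨Module.Free.of_equiv e.symm, ?_⟩
  rw [e.finrank_eq, Module.finrank_pi_fintype]
  simp [mul_comm]

/-- For a field `k` of characteristic 2 and `A = k[x,y]/(x², y²)`, the Hochschild homology
`HH_n(A, A)` is a `k`-vector space of dimension `4(n+1)` for every `n`. -/
theorem hochschildHomology_truncPoly (k : Type) [Field k] [CharP k 2] (n : ℕ) :
    Module.finrank k
      (HochschildHomology k
        (MvPolynomial (Fin 2) k ⧸
          Ideal.span {(MvPolynomial.X 0 : MvPolynomial (Fin 2) k) ^ 2,
            (MvPolynomial.X 1 : MvPolynomial (Fin 2) k) ^ 2}) n)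
      = 4 * (n + 1) :=
  (hochschildHomology_truncPoly_general k n).2
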